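/- arXiv:1901.02358 — 2 statements merged into one kernel-verified Lean document; each statement's English description precedes it below -/
import Mathlib

section
/- Let d, t, T be natural numbers with t ≤ T, let α ≥ 0 and β > 0 be real numbers, and let A_t, A_{t+1}, …, A_{T-1} ∈ ℝ^{d×d} be matrices with ‖A_k‖₂ ≤ m for all k, where (α/β)·m < 1. Then the matrix M = ∏_{k=t}^{T-1} (α A_k + β I) is invertible and its condition number satisfies ‖M‖₂ · ‖M⁻¹‖₂ ≤ ((1 + (α/β)m)/(1 − (α/β)m))^{T−t}. -/
/-- The spectral (ℓ₂ operator) norm of a real matrix. -/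
noncomputable def specNorm {m n : ℕ} (A : Matrix (Fin m) (Fin n) ℝ) : ℝ :=
  ‖LinearMap.toContinuousLinearMap (Matrix.toEuclideanLin A)‖

/-!
Writing `α A + β I = β (I + (α/β) A)`, the scalar `β` does not affect the condition number, and
the Neumann series bounds the condition number of `I + X` by `(1 + ‖X‖) / (1 - ‖X‖)` when `‖X‖ < 1`.
Since the condition number is submultiplicative on units, the bounds of the factors multiply.
Because `‖1‖ = 0` for `0 × 0` matrices, the norm is normalised by `‖1‖ ≤ 1` rather than by
`NormOneClass`.
-/

section SeminormedRing

variable {R : Type*} [SeminormedRing R]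

/-- The condition number `‖a‖ * ‖a⁻¹‖` of an element of a normed ring. The inverse is
`Ring.inverse`, so the condition number of a non-unit has the junk value `0`. -/
noncomputable def conditionNumber (a : R) : ℝ :=
  ‖a‖ * ‖Ring.inverse a‖

theorem conditionNumber_nonneg (a : R) : 0 ≤ conditionNumber a :=
  mul_nonneg (norm_nonneg _) (norm_nonneg _)

theorem conditionNumber_one_le (hone : ‖(1 : R)‖ ≤ 1) : conditionNumber (1 : R) ≤ 1 := by
  rw [conditionNumber, Ring.inverse_one]
  exact mul_le_one₀ hone (norm_nonneg _) hone

theorem conditionNumber_mul_le {a b : R} (h : IsUnit a ∨ IsUnit b) :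
    conditionNumber (a * b) ≤ conditionNumber a * conditionNumber b :=
  calc ‖a * b‖ * ‖Ring.inverse (a * b)‖
      = ‖a * b‖ * ‖Ring.inverse b * Ring.inverse a‖ := by rw [Ring.inverse_mul h]
    _ ≤ (‖a‖ * ‖b‖) * (‖Ring.inverse b‖ * ‖Ring.inverse a‖) := by
      gcongr <;> exact norm_mul_le _ _
    _ = (‖a‖ * ‖Ring.inverse a‖) * (‖b‖ * ‖Ring.inverse b‖) := by ring

theorem conditionNumber_list_prod_le (hone : ‖(1 : R)‖ ≤ 1) {l : List R}
    (hl : ∀ a ∈ l, IsUnit a) :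
    conditionNumber l.prod ≤ (l.map conditionNumber).prod := by
  induction l with
  | nil => exact conditionNumber_one_le hone
  | cons a l ih =>
    obtain ⟨ha, hl⟩ := List.forall_mem_cons.mp hl
    rw [List.prod_cons, List.map_cons, List.prod_cons]
    exact (conditionNumber_mul_le (.inl ha)).trans
      (mul_le_mul_of_nonneg_left (ih hl) (conditionNumber_nonneg a))

theorem conditionNumber_list_prod_le_pow_length (hone : ‖(1 : R)‖ ≤ 1) {l : List R} {r : ℝ}
    (hl : ∀ a ∈ l, IsUnit a) (hr : ∀ a ∈ l, conditionNumber a ≤ r) :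
    conditionNumber l.prod ≤ r ^ l.length :=
  calc conditionNumber l.prod ≤ (l.map conditionNumber).prod :=
        conditionNumber_list_prod_le hone hl
    _ ≤ (l.map fun _ ↦ r).prod :=
        List.prod_map_le_prod_map₀ _ _ (fun a _ ↦ conditionNumber_nonneg a) hr
    _ = r ^ l.length := by rw [List.map_const', List.prod_replicate]

end SeminormedRing

theorem ringInverse_smul {G M : Type*} [GroupWithZero G] [MonoidWithZero M]
    [MulActionWithZero G M] [SMulCommClass G M M] [IsScalarTower G M M] (c : G) (a : M) :
    Ring.inverse (c • a) = c⁻¹ • Ring.inverse a := by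
  rcases eq_or_ne c 0 with rfl | hc
  · rw [zero_smul, Ring.inverse_zero, inv_zero, zero_smul]
  lift c to Gˣ using hc.isUnit
  rw [← Units.val_inv_eq_inv_val, ← Units.smul_def, ← Units.smul_def]
  by_cases ha : IsUnit a
  · lift a to Mˣ using ha
    rw [← Units.val_smul, Ring.inverse_unit, Ring.inverse_unit, Units.smul_inv, Units.val_smul]
  · rw [Ring.inverse_non_unit a ha, Ring.inverse_non_unit _ ((isUnit_smul_iff c a).not.mpr ha),
      smul_zero]

theorem conditionNumber_smul {𝕜 R : Type*} [NormedField 𝕜] [SeminormedRing R]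
    [NormedAlgebra 𝕜 R] {c : 𝕜} (hc : c ≠ 0) (a : R) :
    conditionNumber (c • a) = conditionNumber a := by
  rw [conditionNumber, ringInverse_smul, norm_smul, norm_smul, norm_inv, conditionNumber]
  have hnorm : ‖c‖ ≠ 0 := norm_ne_zero_iff.mpr hc
  field_simp

section NeumannSeries

variable {R : Type*} [NormedRing R] [HasSummableGeomSeries R]

theorem isUnit_one_add_of_norm_lt_one {x : R} (hx : ‖x‖ < 1) : IsUnit (1 + x) := by
  rw [← sub_neg_eq_add]
  exact isUnit_one_sub_of_norm_lt_one (by rwa [norm_neg])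

theorem norm_ringInverse_one_add_le (hone : ‖(1 : R)‖ ≤ 1) {x : R} (hx : ‖x‖ < 1) :
    ‖Ring.inverse (1 + x)‖ ≤ (1 - ‖x‖)⁻¹ := by
  have hneg : ‖-x‖ < 1 := by rwa [norm_neg]
  have hseries := tsum_geometric_le_of_norm_lt_one (-x) hneg
  rw [geom_series_eq_inverse _ hneg, sub_neg_eq_add, norm_neg] at hseries
  linarith

theorem conditionNumber_one_add_le (hone : ‖(1 : R)‖ ≤ 1) {x : R} {r : ℝ} (hx : ‖x‖ ≤ r)
    (hr : r < 1) : conditionNumber (1 + x) ≤ (1 + r) / (1 - r) := by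
  have hnorm : ‖1 + x‖ ≤ 1 + r := (norm_add_le _ _).trans (add_le_add hone hx)
  have hinv : ‖Ring.inverse (1 + x)‖ ≤ (1 - r)⁻¹ :=
    (norm_ringInverse_one_add_le hone (hx.trans_lt hr)).trans <|
      inv_anti₀ (sub_pos.mpr hr) (sub_le_sub_left hx 1)
  exact mul_le_mul hnorm hinv (norm_nonneg _) ((norm_nonneg _).trans hnorm)

theorem fastRNN_gradient_factor_condition_number_general {𝕜 ι : Type*} [NormedField 𝕜]
    [NormedAlgebra 𝕜 R] (hone : ‖(1 : R)‖ ≤ 1) {α β : 𝕜} (hβ : β ≠ 0) {m : ℝ} {l : List ι}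
    {A : ι → R} (hA : ∀ k ∈ l, ‖A k‖ ≤ m) (hm : ‖α / β‖ * m < 1) :
    let M := (l.map fun k ↦ α • A k + β • (1 : R)).prod
    IsUnit M ∧
      conditionNumber M ≤ ((1 + ‖α / β‖ * m) / (1 - ‖α / β‖ * m)) ^ l.length := by
  intro M
  have hfactor (k : ι) : α • A k + β • (1 : R) = β • (1 + (α / β) • A k) := by
    rw [smul_add, smul_smul, mul_div_cancel₀ _ hβ, add_comm]
  have hnorm (k : ι) (hk : k ∈ l) : ‖(α / β) • A k‖ ≤ ‖α / β‖ * m := by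
    rw [norm_smul]
    exact mul_le_mul_of_nonneg_left (hA k hk) (norm_nonneg _)
  have hunit : ∀ a ∈ l.map (fun k ↦ α • A k + β • (1 : R)), IsUnit a := by
    refine List.forall_mem_map.mpr fun k hk ↦ ?_
    rw [hfactor]
    exact (isUnit_one_add_of_norm_lt_one ((hnorm k hk).trans_lt hm)).smul (Units.mk0 β hβ)
  refine ⟨List.prod_isUnit hunit, ?_⟩
  rw [← l.length_map (f := fun k ↦ α • A k + β • (1 : R))]
  refine conditionNumber_list_prod_le_pow_length hone hunit (List.forall_mem_map.mpr fun k hk ↦ ?_)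
  rw [hfactor, conditionNumber_smul hβ]
  exact conditionNumber_one_add_le hone (hnorm k hk) hm

end NeumannSeries

section Matrix

open scoped Matrix.Norms.L2Operator

theorem l2_opNorm_one_le {𝕜 n : Type*} [RCLike 𝕜] [Fintype n] [DecidableEq n] :
    ‖(1 : Matrix n n 𝕜)‖ ≤ 1 := by
  rw [← Matrix.diagonal_one, Matrix.l2_opNorm_diagonal]
  exact (pi_norm_const_le (1 : 𝕜)).trans_eq norm_one

theorem specNorm_eq_l2_opNorm {m n : ℕ} (A : Matrix (Fin m) (Fin n) ℝ) : specNorm A = ‖A‖ :=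
  rfl

theorem specNorm_mul_specNorm_inv {d : ℕ} (A : Matrix (Fin d) (Fin d) ℝ) :
    specNorm A * specNorm A⁻¹ = conditionNumber A := by
  rw [specNorm_eq_l2_opNorm, specNorm_eq_l2_opNorm, Matrix.nonsing_inv_eq_ringInverse,
    conditionNumber]

end Matrix

/-- For `t ≤ T`, `α ≥ 0`, `β > 0` and matrices `A_t, …, A_{T-1}` with
`‖A_k‖₂ ≤ m` and `(α/β)·m < 1`, the matrix `M = ∏_{k=t}^{T-1} (α A_k + β I)` is invertible
and its condition number satisfies
`‖M‖₂ ‖M⁻¹‖₂ ≤ ((1 + (α/β) m)/(1 − (α/β) m))^(T−t)`. -/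
theorem fastRNN_gradient_factor_condition_number
    (d t T : ℕ) (htT : t ≤ T) (α β m : ℝ) (hα : 0 ≤ α) (hβ : 0 < β)
    (A : ℕ → Matrix (Fin d) (Fin d) ℝ)
    (hA : ∀ k, t ≤ k → k < T → specNorm (A k) ≤ m)
    (hm : α / β * m < 1) :
    let M := ((List.Ico t T).map
      (fun k => α • A k + β • (1 : Matrix (Fin d) (Fin d) ℝ))).prod
    IsUnit M ∧
      specNorm M * specNorm M⁻¹ ≤ ((1 + α / β * m) / (1 - α / β * m)) ^ (T - t) := by
  intro M
  have hratio : ‖α / β‖ = α / β := Real.norm_of_nonneg (div_nonneg hα hβ.le)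
  open scoped Matrix.Norms.L2Operator in
  have hnorm : ∀ k ∈ List.Ico t T, ‖A k‖ ≤ m :=
    fun k hk ↦ (specNorm_eq_l2_opNorm (A k)).ge.trans ((List.Ico.mem.mp hk).elim (hA k))
  rw [specNorm_mul_specNorm_inv, ← List.Ico.length, ← hratio]
  exact fastRNN_gradient_factor_condition_number_general l2_opNorm_one_le hβ.ne' hnorm
    (by rwa [hratio])
end

section
/- Let T, d be natural numbers, U ∈ ℝ^{d×d}, and D_0, D_1, …, D_T ∈ ℝ^{d×d} matrices with ‖D_k‖₂ ≤ 𝒟 for all k, where 𝒟 ≥ 0. Let 0 ≤ α ≤ 1 and β = 1 − α, suppose 𝒟·‖U‖₂ ≠ 1 and α ≤ 1/(4T·|𝒟‖U‖₂ − 1|). Define A_t = D_t · ∏_{k=t}^{T-1}(α Uᵀ D_{k+1} + β I) for t = 0, …, T (with A_T = D_T). Then Σ_{t=0}^{T} ‖A_t‖₂ ≤ 2𝒟·(T + 1). -/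
theorem one_add_pow_le_of_mul_le_log {n N : ℕ} (hn : n ≤ N) {y C : ℝ} (hy : -1 ≤ y) (hC : 1 ≤ C)
    (hNy : N * y ≤ Real.log C) : (1 + y) ^ n ≤ C := by
  have hny : n * y ≤ Real.log C := by
    rcases le_total 0 y with h | h
    · exact (mul_le_mul_of_nonneg_right (Nat.cast_le.mpr hn) h).trans hNy
    · exact (mul_nonpos_of_nonneg_of_nonpos n.cast_nonneg h).trans (Real.log_nonneg hC)
  calc (1 + y) ^ n ≤ Real.exp y ^ n := by
        gcongr
        · linarith
        · linarith [Real.add_one_le_exp y]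
    _ = Real.exp (n * y) := (Real.exp_nat_mul y n).symm
    _ ≤ C := (Real.le_log_iff_exp_le (by linarith)).mp hny

theorem mul_mul_le_log_two_of_le_one_div {N α x : ℝ} (hN : 0 ≤ N) (hα : 0 ≤ α)
    (h : α ≤ 1 / (4 * N * |x|)) : N * (α * x) ≤ Real.log 2 := by
  have h_abs : α * (4 * N * |x|) ≤ 1 := mul_le_of_le_div₀ zero_le_one (by positivity) h
  calc N * (α * x) ≤ N * (α * |x|) := by gcongr; exact le_abs_self x
    _ ≤ 1 / 4 := by linarith
    _ ≤ Real.log 2 := by linarith [Real.log_two_gt_d9]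

section SeminormedRing

variable {R : Type*} [SeminormedRing R]

theorem norm_list_map_prod_le_pow_length (h_one : ‖(1 : R)‖ ≤ 1) {ι : Type*} {f : ι → R} {c : ℝ}
    {l : List ι} (hf : ∀ i ∈ l, ‖f i‖ ≤ c) : ‖(l.map f).prod‖ ≤ c ^ l.length := by
  induction l with
  | nil => simpa using h_one
  | cons i l ih =>
    rw [List.forall_mem_cons] at hf
    rw [List.map_cons, List.prod_cons, List.length_cons, pow_succ']
    exact norm_mul_le_of_le hf.1 (ih hf.2)

variable [NormedAlgebra ℝ R]

theorem norm_smul_add_one_sub_smul_one_le (h_one : ‖(1 : R)‖ ≤ 1) {α c : ℝ} (hα0 : 0 ≤ α)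
    (hα1 : α ≤ 1) {x : R} (hx : ‖x‖ ≤ c) : ‖α • x + (1 - α) • (1 : R)‖ ≤ 1 + α * (c - 1) := by
  have hβ : 0 ≤ 1 - α := sub_nonneg.mpr hα1
  calc ‖α • x + (1 - α) • (1 : R)‖ ≤ α * ‖x‖ + (1 - α) * ‖(1 : R)‖ := by
        simpa only [norm_smul, Real.norm_of_nonneg hα0, Real.norm_of_nonneg hβ]
          using norm_add_le (α • x) ((1 - α) • (1 : R))
    _ ≤ α * c + (1 - α) * 1 := by gcongr
    _ = 1 + α * (c - 1) := by ring

/-- The gradient factor `A_t = D_t ∏_{k=t}^{T-1} (α V D_{k+1} + (1 - α) I)` of a FastRNN of length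
`T`, in an arbitrary real algebra. The factors are multiplied in increasing order of `k` from left
to right, and `V` stands for the transposed recurrence matrix. -/
def fastRNNGradientFactor (α : ℝ) (V : R) (D : ℕ → R) (T t : ℕ) : R :=
  D t * ((List.Ico t T).map fun k => α • (V * D (k + 1)) + (1 - α) • (1 : R)).prod

theorem norm_fastRNNGradientFactor_le (h_one : ‖(1 : R)‖ ≤ 1) {T t : ℕ} (ht : t ≤ T) {V : R}
    {D : ℕ → R} {δ α : ℝ} (hD : ∀ k ≤ T, ‖D k‖ ≤ δ) (hα0 : 0 ≤ α) (hα1 : α ≤ 1) :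
    ‖fastRNNGradientFactor α V D T t‖ ≤ δ * (1 + α * (δ * ‖V‖ - 1)) ^ (T - t) := by
  have h_factor : ∀ k ∈ List.Ico t T,
      ‖α • (V * D (k + 1)) + (1 - α) • (1 : R)‖ ≤ 1 + α * (δ * ‖V‖ - 1) := by
    intro k hk
    have hVD : ‖V * D (k + 1)‖ ≤ δ * ‖V‖ :=
      mul_comm ‖V‖ δ ▸ norm_mul_le_of_le le_rfl (hD _ (List.Ico.mem.mp hk).2)
    exact norm_smul_add_one_sub_smul_one_le h_one hα0 hα1 hVD
  have h_prod := norm_list_map_prod_le_pow_length h_one h_factor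
  rw [List.Ico.length] at h_prod
  exact norm_mul_le_of_le (hD t ht) h_prod

theorem fastRNN_gradient_factors_sum_bound_general (h_one : ‖(1 : R)‖ ≤ 1) {T : ℕ} {V : R}
    {D : ℕ → R} {δ α C : ℝ} (hD : ∀ k ≤ T, ‖D k‖ ≤ δ) (hα0 : 0 ≤ α) (hα1 : α ≤ 1) (hC : 1 ≤ C)
    (hαT : T * (α * (δ * ‖V‖ - 1)) ≤ Real.log C) :
    ∑ t ∈ Finset.range (T + 1), ‖fastRNNGradientFactor α V D T t‖ ≤ C * δ * (T + 1) := by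
  have hδ : 0 ≤ δ := (norm_nonneg _).trans (hD 0 T.zero_le)
  have h_rate : -1 ≤ α * (δ * ‖V‖ - 1) := by
    have : 0 ≤ α * (δ * ‖V‖) := by positivity
    linarith
  have h_term : ∀ t ∈ Finset.range (T + 1), ‖fastRNNGradientFactor α V D T t‖ ≤ C * δ := by
    intro t ht
    calc ‖fastRNNGradientFactor α V D T t‖ ≤ δ * (1 + α * (δ * ‖V‖ - 1)) ^ (T - t) :=
          norm_fastRNNGradientFactor_le h_one (Finset.mem_range_succ_iff.mp ht) hD hα0 hα1
      _ ≤ δ * C := by gcongr; exact one_add_pow_le_of_mul_le_log (T.sub_le t) h_rate hC hαT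
      _ = C * δ := mul_comm δ C
  calc ∑ t ∈ Finset.range (T + 1), ‖fastRNNGradientFactor α V D T t‖
      ≤ (Finset.range (T + 1)).card • (C * δ) := Finset.sum_le_card_nsmul _ _ _ h_term
    _ = C * δ * (T + 1) := by rw [Finset.card_range, nsmul_eq_mul, mul_comm, Nat.cast_succ]

end SeminormedRing

section L2OpNorm

open scoped Matrix.Norms.L2Operator

theorem l2_opNorm_transpose {m n : Type*} [Fintype m] [DecidableEq m] [Fintype n] [DecidableEq n]
    (A : Matrix m n ℝ) : ‖A.transpose‖ = ‖A‖ := by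
  rw [← Matrix.conjTranspose_eq_transpose_of_trivial, Matrix.l2_opNorm_conjTranspose]

end L2OpNorm

/-- Let `‖D_k‖₂ ≤ 𝒟` for `k = 0, …, T`, `β = 1 − α` with `0 ≤ α ≤ 1`,
`𝒟‖U‖₂ ≠ 1` and `α ≤ 1/(4T·|𝒟‖U‖₂ − 1|)`. Then the gradient factors
`A_t = D_t ∏_{k=t}^{T-1}(α Uᵀ D_{k+1} + β I)` (with `A_T = D_T`) satisfy
`Σ_{t=0}^{T} ‖A_t‖₂ ≤ 2𝒟(T + 1)`. -/
theorem fastRNN_gradient_factors_sum_bound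
    (T d : ℕ) (U : Matrix (Fin d) (Fin d) ℝ) (Dmat : ℕ → Matrix (Fin d) (Fin d) ℝ)
    (𝒟 α β : ℝ) (h𝒟0 : 0 ≤ 𝒟)
    (hD : ∀ k, k ≤ T → specNorm (Dmat k) ≤ 𝒟)
    (hα0 : 0 ≤ α) (hα1 : α ≤ 1) (hβ : β = 1 - α)
    (hU1 : 𝒟 * specNorm U ≠ 1)
    (hαT : α ≤ 1 / (4 * T * |𝒟 * specNorm U - 1|)) :
    ∑ t ∈ Finset.range (T + 1),
        specNorm (Dmat t * ((List.Ico t T).map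
          (fun k => α • (U.transpose * Dmat (k + 1)) + β • (1 : Matrix (Fin d) (Fin d) ℝ))).prod)
      ≤ 2 * 𝒟 * (T + 1) := by
  subst hβ
  simp only [specNorm_eq_l2_opNorm] at hD hαT ⊢
  rw [← l2_opNorm_transpose U] at hαT
  have h_step := mul_mul_le_log_two_of_le_one_div T.cast_nonneg hα0 hαT
  open scoped Matrix.Norms.L2Operator in
  exact fastRNN_gradient_factors_sum_bound_general l2_opNorm_one_le hD hα0 hα1 one_le_two h_step
end
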